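/- Let n ≥ 2, m ≥ 1 be integers, let (r^{(n)}_j)_{1 ≤ j ≤ n} be a nondecreasing sequence of positive reals, and set P_{n,m}(z) = Π_{j=1}^n (z^m − (r^{(n)}_j)^m). Then for every 1 ≤ ℓ ≤ n−1, the (ℓm)-th derivative satisfies P_{n,m}^{(ℓm)}(z) = ((nm)!/((n−ℓ)m)!) · Π_{j=1}^{n−ℓ} (z^m − (r^{(n,m,ℓ)}_j)^m) for a nondecreasing sequence of positive numbers (r^{(n,m,ℓ)}_j)_{1 ≤ j ≤ n−ℓ}. Moreover, if (r_j)_{1 ≤ j ≤ n} is a strictly increasing sequence of positive reals with α = max_{1 ≤ j ≤ n−1} r_j/r_{j+1} and r^{(n)}_j ≤ r_j for all 1 ≤ j ≤ n, then for all 1 ≤ j ≤ n−ℓ, r^{(n,m,ℓ)}_j ≤ ((j+1)/((j+ℓ+1)(1 − α^m)^ℓ)) · r_{j+ℓ}. -/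

import Mathlib

open Polynomial

/-!
Substituting `w = z ^ m`, write `P(z) = Q(z ^ m)` with `Q = ∏ (w - a_j)`, `a_j = rn_j ^ m`.
The first derivative of `Q(z ^ m)` is `m z^(m-1) Q'(z ^ m)`, and each further one follows from
`d/dz (z^k R(z ^ m)) = m z^(k-1) (κ R + w R')(z ^ m)` with `κ = k / m ∈ (0, 1]`.
So `m` derivatives of `P` amount to the operator `R ↦ κ R + w R'` with `κ = 0` (which gives
`w Q'`, whose extra root `0` is discarded) and then with `κ = (m-1)/m, …, 1/m`.

For distinct positive roots `b_j` of `R`, Rolle's theorem applied to `x ^ κ R(x)` shows that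
`κ R + w R'` splits over the reals and that its roots `w_j` interlace with the `b_j`
(`step_strict`). At such a root `κ + ∑ w_j / (w_j - b_i) = 0`. If `b_j ≤ B`, `b_i ≤ q B` for
`i < j`, and `K ≥ 1` is at least `κ` plus the number of indices below `j`, this relation gives
`w_j ≤ (K + q) / (K + 1) * B ≤ K / ((K + 1) (1 - q)) * B` (`root_bound`).
Multiple roots are handled by perturbing the `b_j` downwards and a compactness argument (`step`).

Each of the `m` derivatives thus multiplies the bound for the `j`-th root by
`y_j = (j + 2) / ((j + 3) (1 - q))` (indices from `0`), after the index shift caused by `Q'`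
(`level_aux`). Since `y_j` increases with `j`, the new majorants `y_j ^ m * A_{j+1}` still have
consecutive ratios at most `q = α ^ m`, so the argument iterates over `ℓ` blocks of `m`
derivatives, and the product of the `y`'s telescopes (`iterate_levels`). The theorem follows by
taking `m`-th roots, since a monotone tuple is determined by the polynomial with those roots.
-/

/-! ### Polynomials given by their roots -/

/-- The monic polynomial whose roots, with multiplicity, are the entries of `b`. -/
noncomputable def rootPoly {N : ℕ} (b : Fin N → ℝ) : ℝ[X] := ∏ i, (X - C (b i))

lemma eval_rootPoly {N : ℕ} (b : Fin N → ℝ) (x : ℝ) :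
    (rootPoly b).eval x = ∏ i, (x - b i) := by
  simp [rootPoly, eval_prod]

lemma eval_derivative_rootPoly {N : ℕ} (b : Fin N → ℝ) (x : ℝ) :
    (derivative (rootPoly b)).eval x = ∑ i, ∏ j ∈ Finset.univ.erase i, (x - b j) := by
  simp [rootPoly, derivative_prod_finset, eval_finsetSum, eval_prod]

/-! ### One Euler-type operator, preserving positive roots -/

/-- Bound for a root `w` of `κ R + X R'` lying between the consecutive roots `b_{j-1}` and `b_j`
of `R`, from the partial fraction identity `κ + ∑ w / (w - b i) = 0`. -/
lemma root_bound {N : ℕ} {κ w B q K : ℝ} (b : Fin N → ℝ) (j : Fin N) (hκ : 0 ≤ κ) (hw : 0 < w)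
    (hroot : κ * (rootPoly b).eval w + w * (derivative (rootPoly b)).eval w = 0)
    (hlt : ∀ i < j, b i < w) (hge : ∀ i, j ≤ i → w < b i)
    (hB : b j ≤ B) (hqB : ∀ i < j, b i ≤ q * B) (hq0 : 0 ≤ q) (hq1 : q < 1)
    (hK : 1 ≤ K) (hκK : κ + (j : ℕ) ≤ K) :
    w ≤ K / ((K + 1) * (1 - q)) * B := by
  have hwB : w < B := (hge j le_rfl).trans_le hB
  have hB0 : 0 < B := hw.trans hwB
  have key : (K + 1) * w ≤ (K + q) * B := by
    rcases le_or_gt w (q * B) with h | h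
    · have hK0 : (0 : ℝ) ≤ K + 1 := by linarith
      nlinarith [mul_le_mul_of_nonneg_left h hK0,
        mul_nonneg (mul_nonneg (sub_nonneg.2 hq1.le) hB0.le) (by linarith : (0 : ℝ) ≤ K)]
    have hne : ∀ i, w - b i ≠ 0 := by
      intro i
      rcases lt_or_ge i j with hi | hi
      · exact (sub_pos.2 (hlt i hi)).ne'
      · exact (sub_neg.2 (hge i hi)).ne
    have hsum : κ + ∑ i, w / (w - b i) = 0 := by
      have hP : ∏ i, (w - b i) ≠ 0 := Finset.prod_ne_zero_iff.2 fun i _ => hne i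
      rw [eval_rootPoly, eval_derivative_rootPoly] at hroot
      have : ∀ i, ∏ k ∈ Finset.univ.erase i, (w - b k) = (∏ k, (w - b k)) / (w - b i) := by
        intro i
        rw [eq_div_iff (hne i), Finset.prod_erase_mul _ _ (Finset.mem_univ i)]
      simp_rw [this] at hroot
      have h2 : (∏ k, (w - b k)) * (κ + ∑ i, w / (w - b i)) = 0 := by
        rw [← hroot, mul_add, Finset.mul_sum, Finset.mul_sum, mul_comm κ]
        congr 1
        exact Finset.sum_congr rfl fun i _ => by ring
      exact (mul_eq_zero.1 h2).resolve_left hP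
    -- Terms with `i > j` are negative and are dropped; the others are replaced by their worst case.
    have hle : ∑ i, w / (w - b i) ≤
        ∑ i, ((if i < j then w / (w - q * B) else 0) + if i = j then - (w / (B - w)) else 0) := by
      refine Finset.sum_le_sum fun i _ => ?_
      rcases lt_trichotomy i j with hi | hi | hi
      · simp only [hi, hi.ne, if_true, if_false, add_zero]
        have := hqB i hi
        exact div_le_div_of_nonneg_left hw.le (by linarith) (by linarith)
      · subst hi
        simp only [lt_irrefl, if_true, if_false, zero_add]
        have h3 := hge i le_rfl
        rw [← neg_sub (b i) w, div_neg]
        exact neg_le_neg (div_le_div_of_nonneg_left hw.le (by linarith) (by linarith))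
      · simp only [hi.not_gt, hi.ne', if_false, add_zero]
        exact div_nonpos_of_nonneg_of_nonpos hw.le (by linarith [hge i hi.le])
    have hcard : (Finset.univ.filter (· < j)).card = (j : ℕ) := by
      rw [show Finset.univ.filter (· < j) = Finset.Iio j by ext; simp, Fin.card_Iio]
    rw [Finset.sum_add_distrib, Finset.sum_ite_eq', if_pos (Finset.mem_univ j),
      ← Finset.sum_filter, Finset.sum_const, nsmul_eq_mul, hcard] at hle
    have h4 : w / (B - w) ≤ κ + (j : ℕ) * (w / (w - q * B)) := by linarith
    have h5 : (1 : ℝ) ≤ w / (w - q * B) := by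
      rw [one_le_div (by linarith)]; nlinarith
    have h6 : w / (B - w) ≤ K * (w / (w - q * B)) := by
      have : κ ≤ κ * (w / (w - q * B)) := le_mul_of_one_le_right hκ h5
      nlinarith
    rw [← mul_div_assoc, div_le_div_iff₀ (by linarith) (by linarith)] at h6
    have h7 : w - q * B ≤ K * (B - w) := by
      by_contra hc
      nlinarith [mul_lt_mul_of_pos_left (not_le.1 hc) hw]
    linarith
  have hpos : 0 < (K + 1) * (1 - q) := mul_pos (by linarith) (by linarith)
  rw [div_mul_eq_mul_div, le_div_iff₀ hpos]
  have := mul_le_mul_of_nonneg_right key (sub_nonneg.2 hq1.le)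
  have h8 : 0 ≤ (q * (K - 1) + q ^ 2) * B :=
    mul_nonneg (add_nonneg (mul_nonneg hq0 (by linarith)) (sq_nonneg q)) hB0.le
  nlinarith

/-- Rolle's theorem for `x ^ κ * R(x)`, whose derivative is `x ^ (κ - 1) * (κ R + x R')(x)`.
If `κ = 0` the left endpoint must be positive. -/
lemma rolle_step {N : ℕ} {κ a c : ℝ} (b : Fin N → ℝ) (ha : 0 ≤ a) (hac : a < c)
    (hκ : 0 < κ ∨ 0 < a)
    (hfa : a ^ κ * (rootPoly b).eval a = 0) (hfc : (rootPoly b).eval c = 0) :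
    ∃ w, a < w ∧ w < c ∧
      κ * (rootPoly b).eval w + w * (derivative (rootPoly b)).eval w = 0 := by
  have hcont : ContinuousOn (fun x : ℝ => x ^ κ * (rootPoly b).eval x) (Set.Icc a c) := by
    refine ContinuousOn.mul ?_ (Polynomial.continuous _).continuousOn
    refine ContinuousOn.rpow_const continuousOn_id fun x hx => ?_
    rcases hκ with h | h
    · exact Or.inr h.le
    · exact Or.inl (h.trans_le hx.1).ne'
  obtain ⟨w, ⟨h1, h2⟩, h3⟩ := exists_hasDerivAt_eq_zero hac hcont
    (by simp only [hfa, hfc, mul_zero])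
    (fun x hx => (Real.hasDerivAt_rpow_const (p := κ) (Or.inl (ha.trans_lt hx.1).ne')).mul
      ((rootPoly b).hasDerivAt x))
  have hw : 0 < w := ha.trans_lt h1
  refine ⟨w, h1, h2, ?_⟩
  have h4 : w ^ κ = w ^ (κ - 1) * w := by
    rw [← Real.rpow_add_one hw.ne']; simp
  rw [h4] at h3
  have h5 : w ^ (κ - 1) * (κ * (rootPoly b).eval w + w * (derivative (rootPoly b)).eval w) = 0 := by
    rw [← h3]; ring
  exact (mul_eq_zero.1 h5).resolve_left (Real.rpow_pos_of_pos hw _).ne'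

lemma monic_rootPoly {N : ℕ} (b : Fin N → ℝ) : (rootPoly b).Monic :=
  monic_prod_of_monic _ _ fun _ _ => monic_X_sub_C _

lemma natDegree_rootPoly {N : ℕ} (b : Fin N → ℝ) : (rootPoly b).natDegree = N := by
  simp [rootPoly]

/-- `N` distinct roots determine `κ R + X R'`, which has degree at most `N` and whose coefficient
of degree `N` is `κ + N`. -/
lemma eq_rootPoly_of_roots {N : ℕ} (κ : ℝ) (b w : Fin N → ℝ) (hw : Function.Injective w)
    (hroot : ∀ j, κ * (rootPoly b).eval (w j) + w j * (derivative (rootPoly b)).eval (w j) = 0) :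
    C κ * rootPoly b + X * derivative (rootPoly b) = C (κ + N) * rootPoly w := by
  rw [← sub_eq_zero]
  apply eq_zero_of_degree_lt_of_eval_finset_eq_zero (Finset.univ.image w)
  · rw [Finset.card_image_of_injective _ hw, Finset.card_univ, Fintype.card_fin,
      degree_lt_iff_coeff_zero]
    intro k hk
    have hmon : ∀ v : Fin N → ℝ, ∀ l, (rootPoly v).coeff (N + l) = if l = 0 then 1 else 0 := by
      intro v l
      split_ifs with h
      · have := monic_rootPoly v
        rw [Monic, leadingCoeff, natDegree_rootPoly] at this
        rw [h, add_zero, this]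
      · exact coeff_eq_zero_of_natDegree_lt (by rw [natDegree_rootPoly]; omega)
    obtain ⟨l, rfl⟩ := Nat.exists_eq_add_of_le hk
    have hX : (X * derivative (rootPoly b)).coeff (N + l) =
        (N + l) * (rootPoly b).coeff (N + l) := by
      rcases h : N + l with _ | d
      · have : N = 0 ∧ l = 0 := by omega
        simp [this]
      · rw [coeff_X_mul, coeff_derivative]
        have : (N + l : ℝ) = d + 1 := by exact_mod_cast h
        rw [this]; ring
    simp only [coeff_sub, coeff_add, coeff_C_mul, hX, hmon]
    split_ifs with h
    · simp [h]
    · simp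
  · intro x hx
    obtain ⟨j, -, rfl⟩ := Finset.mem_image.1 hx
    have h0 : (rootPoly w).eval (w j) = 0 := by
      rw [eval_rootPoly]; exact Finset.prod_eq_zero (Finset.mem_univ j) (sub_self _)
    simp [h0, hroot j]

/-- The upper bound on the roots `w` of `κ R + X R'` in terms of the roots `b` of `R`: if
`b j ≤ B` and all earlier roots are at most `q B`, then `w j ≤ K / ((K + 1) (1 - q)) * B` for
every `K ≥ 1` that is at least `κ + j`. -/
def StepBound {N : ℕ} (κ : ℝ) (b w : Fin N → ℝ) : Prop :=
  ∀ (j : Fin N) (B q K : ℝ), 0 ≤ q → q < 1 → 1 ≤ K → κ + (j : ℕ) ≤ K → b j ≤ B →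
    (∀ i < j, b i ≤ q * B) → w j ≤ K / ((K + 1) * (1 - q)) * B

lemma step_strict {N : ℕ} {κ : ℝ} (hκ : 0 ≤ κ) (b : Fin N → ℝ) (hb : StrictMono b)
    (hpos : ∀ j, 0 < b j) :
    ∃ w : Fin N → ℝ, (∀ j, 0 ≤ w j) ∧ (∀ j, w j ≤ b j) ∧ (∀ i j, i < j → b i ≤ w j) ∧
      C κ * rootPoly b + X * derivative (rootPoly b) = C (κ + N) * rootPoly w ∧
      StepBound κ b w := by
  have hzero : ∀ i, (rootPoly b).eval (b i) = 0 := fun i => by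
    rw [eval_rootPoly]; exact Finset.prod_eq_zero (Finset.mem_univ i) (sub_self _)
  have hex : ∀ j, ∃ w, 0 ≤ w ∧ w < b j ∧ (∀ i < j, b i < w) ∧
      κ * (rootPoly b).eval w + w * (derivative (rootPoly b)).eval w = 0 := by
    rintro ⟨j, hj⟩
    rcases j with _ | j
    · have hno : ∀ i : Fin N, ¬ i < ⟨0, hj⟩ := fun i hi => Nat.not_lt_zero _ hi
      rcases hκ.eq_or_lt with rfl | hκ'
      · exact ⟨0, le_rfl, hpos _, fun i hi => (hno i hi).elim, by simp⟩
      · obtain ⟨w, h1, h2, h3⟩ := rolle_step (κ := κ) b le_rfl (hpos ⟨0, hj⟩) (Or.inl hκ')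
          (by simp [Real.zero_rpow hκ'.ne']) (hzero _)
        exact ⟨w, h1.le, h2, fun i hi => (hno i hi).elim, h3⟩
    · have hj' : j < N := by omega
      obtain ⟨w, h1, h2, h3⟩ := rolle_step (κ := κ) b (hpos ⟨j, hj'⟩).le
        (hb (show (⟨j, hj'⟩ : Fin N) < ⟨j + 1, hj⟩ from Nat.lt_succ_self j))
        (Or.inr (hpos _)) (by simp [hzero]) (hzero _)
      refine ⟨w, ((hpos _).trans h1).le, h2, fun i hi => lt_of_le_of_lt (hb.monotone ?_) h1, h3⟩
      exact Nat.le_of_lt_succ hi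
  choose w h0 hlt hgt hroot using hex
  have hw : StrictMono w := fun i j hij => (hlt i).trans (hgt j i hij)
  refine ⟨w, h0, fun j => (hlt j).le, fun i j hij => (hgt j i hij).le,
    eq_rootPoly_of_roots κ b w hw.injective hroot, ?_⟩
  intro j B q K hq0 hq1 hK hκK hB hqB
  rcases (h0 j).eq_or_lt with h | h
  · rw [← h]
    have : 0 < B := (hpos j).trans_le hB
    have : 0 < 1 - q := by linarith
    positivity
  · exact root_bound b j hκ h (hroot j) (hgt j)
      (fun i hi => (hlt j).trans_le (hb.monotone hi)) hB hqB hq0 hq1 hK hκK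

open Filter Topology in
/-- `step_strict` without the assumption that the roots are distinct: the conclusions are closed
conditions, so they pass to the limit along a perturbation of `b` with distinct roots. The
perturbation decreases each root, which preserves the hypotheses in `StepBound`. -/
lemma step {N : ℕ} {κ : ℝ} (hκ : 0 ≤ κ) (b : Fin N → ℝ) (hb : Monotone b)
    (hpos : ∀ j, 0 < b j) :
    ∃ w : Fin N → ℝ, (∀ j, 0 ≤ w j) ∧ (∀ j, w j ≤ b j) ∧ (∀ i j, i < j → b i ≤ w j) ∧
      C κ * rootPoly b + X * derivative (rootPoly b) = C (κ + N) * rootPoly w ∧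
      StepBound κ b w := by
  let bk : ℕ → Fin N → ℝ := fun k i => b i * (((k : ℝ) + (i : ℕ) + 1) / (k + N + 1))
  have hbkpos : ∀ k j, 0 < bk k j := fun k j => mul_pos (hpos j) (by positivity)
  have hbkle : ∀ k j, bk k j ≤ b j := fun k j => by
    refine mul_le_of_le_one_right (hpos j).le ?_
    rw [div_le_one (by positivity)]
    have : ((j : ℕ) : ℝ) ≤ N := by exact_mod_cast j.2.le
    linarith
  have hbkmono : ∀ k, StrictMono (bk k) := fun k i j hij => by
    have h1 : ((i : ℕ) : ℝ) < (j : ℕ) := by exact_mod_cast hij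
    have h2 : ((k : ℝ) + (i : ℕ) + 1) / (k + N + 1) < ((k : ℝ) + (j : ℕ) + 1) / (k + N + 1) :=
      div_lt_div_of_pos_right (by linarith) (by positivity)
    exact mul_lt_mul' (hb hij.le) h2 (by positivity) (hpos j)
  have hbklim : Tendsto bk atTop (𝓝 b) := by
    rw [tendsto_pi_nhds]
    intro i
    have h1 : Tendsto (fun k : ℕ => 1 - ((N : ℝ) - (i : ℕ)) / (k + N + 1)) atTop (𝓝 (1 - 0)) := by
      refine tendsto_const_nhds.sub (Tendsto.const_div_atTop ?_ _)
      exact tendsto_atTop_add_const_right _ _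
        (tendsto_atTop_add_const_right _ _ tendsto_natCast_atTop_atTop)
    have h2 := h1.const_mul (b i)
    simp only [sub_zero, mul_one] at h2
    refine h2.congr fun k => ?_
    have : (k : ℝ) + N + 1 ≠ 0 := by positivity
    simp only [bk]
    field_simp
    ring
  choose wk h0 hle hge heq hbd using fun k => step_strict hκ (bk k) (hbkmono k) (hbkpos k)
  have hmem : ∀ k, wk k ∈ Set.Icc (0 : Fin N → ℝ) b := fun k =>
    ⟨fun j => h0 k j, fun j => (hle k j).trans (hbkle k j)⟩
  obtain ⟨w, hw, φ, hφ, hlim⟩ := isCompact_Icc.tendsto_subseq hmem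
  have hblim : Tendsto (fun k => bk (φ k)) atTop (𝓝 b) := hbklim.comp hφ.tendsto_atTop
  have hwj : ∀ j, Tendsto (fun k => wk (φ k) j) atTop (𝓝 (w j)) := fun j =>
    (tendsto_pi_nhds.1 hlim) j
  refine ⟨w, hw.1, hw.2, fun i j hij => ?_, ?_, ?_⟩
  · exact le_of_tendsto_of_tendsto' ((tendsto_pi_nhds.1 hblim) i) (hwj j)
      fun k => hge (φ k) i j hij
  · refine Polynomial.funext fun x => ?_
    have hc1 : Continuous fun v : Fin N → ℝ =>
        (C κ * rootPoly v + X * derivative (rootPoly v)).eval x := by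
      simp only [eval_add, eval_mul, eval_C, eval_X, eval_rootPoly, eval_derivative_rootPoly]
      fun_prop
    have hc2 : Continuous fun v : Fin N → ℝ => (C (κ + N) * rootPoly v).eval x := by
      simp only [eval_mul, eval_C, eval_rootPoly]
      fun_prop
    refine tendsto_nhds_unique ((hc1.tendsto b).comp hblim) ?_
    refine ((hc2.tendsto w).comp hlim).congr fun k => ?_
    simp only [Function.comp, heq]
  · intro j B q K hq0 hq1 hK hκK hB hqB
    exact le_of_tendsto' (hwj j) fun k => hbd (φ k) j B q K hq0 hq1 hK hκK
      ((hbkle _ _).trans hB) fun i hi => (hbkle _ _).trans (hqB i hi)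

/-! ### A block of `m` derivatives -/

lemma derivative_X_pow_mul_expand (k m : ℕ) (hm : 1 ≤ m) (p : ℝ[X]) :
    derivative (X ^ (k + 1) * expand ℝ m p) =
      X ^ k * expand ℝ m (C ((k : ℝ) + 1) * p + C (m : ℝ) * (X * derivative p)) := by
  obtain ⟨d, rfl⟩ := Nat.exists_eq_add_of_le' hm
  simp only [derivative_mul, derivative_X_pow, derivative_expand, map_add, map_mul, expand_X,
    map_natCast, map_one, Nat.add_sub_cancel, Nat.cast_add, Nat.cast_one]
  ring

/-- The bound on the `N` roots `w` in the variable `z ^ m` after `e` derivatives (`1 ≤ e ≤ m`) of a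
polynomial with `N + 1` roots `a`: if `A` dominates `a` and grows at least by the factor `1 / q`
from one index to the next, then `w j ≤ y_j ^ e * A (j + 1)` with
`y_j = (j + 2) / ((j + 3) (1 - q))`. -/
def LevelBound {N : ℕ} (e : ℕ) (a : Fin (N + 1) → ℝ) (w : Fin N → ℝ) : Prop :=
  ∀ (q : ℝ) (A : Fin (N + 1) → ℝ), 0 ≤ q → q < 1 → (∀ j, a j ≤ A j) →
    (∀ i j, i < j → A i ≤ q * A j) →
    ∀ j : Fin N, w j ≤ (((j : ℕ) + 2 : ℝ) / (((j : ℕ) + 2 + 1 : ℝ) * (1 - q))) ^ e * A j.succ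

lemma factor_mono {i j q : ℝ} (hi : 0 ≤ i) (hij : i ≤ j) (hq : q < 1) :
    (i + 2) / ((i + 2 + 1) * (1 - q)) ≤ (j + 2) / ((j + 2 + 1) * (1 - q)) := by
  have hq' : 0 < 1 - q := by linarith
  rw [← div_div, ← div_div]
  refine div_le_div_of_nonneg_right ?_ hq'.le
  rw [div_le_div_iff₀ (by linarith) (by linarith)]
  nlinarith

lemma monotone_of_interlace {N : ℕ} {b w : Fin N → ℝ} (h1 : ∀ j, w j ≤ b j)
    (h2 : ∀ i j, i < j → b i ≤ w j) : Monotone w := fun i j hij => by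
  rcases hij.eq_or_lt with rfl | h
  · exact le_rfl
  · exact (h1 i).trans (h2 i j h)

/-- The first derivative, obtained from `step` with `κ = 0`: the root `0` of `X * Q'` is the first
one in the interlacing, and removing it shifts the indices by one. -/
lemma first_step {N m : ℕ} (a : Fin (N + 1) → ℝ) (ha : Monotone a)
    (hpos : ∀ j, 0 < a j) :
    ∃ (w : Fin N → ℝ) (c : ℝ), Monotone w ∧ (∀ j, 0 < w j) ∧
      derivative (expand ℝ m (rootPoly a)) = C c * (X ^ (m - 1) * expand ℝ m (rootPoly w)) ∧
      LevelBound 1 a w := by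
  obtain ⟨v, h0, hle, hge, heq, hbd⟩ := step le_rfl a ha hpos
  have hv0 : v 0 = 0 := by
    have h1 := congrArg (eval 0) heq
    simp only [map_zero, zero_mul, zero_add, eval_mul, eval_X, eval_C, eval_rootPoly] at h1
    have h2 : ((N + 1 : ℕ) : ℝ) ≠ 0 := by positivity
    obtain ⟨j, -, hj⟩ := Finset.prod_eq_zero_iff.1
      ((mul_eq_zero.1 h1.symm).resolve_left h2)
    rcases eq_or_ne j 0 with rfl | hj0
    · linarith
    · have := hge 0 j (Fin.pos_of_ne_zero hj0)
      linarith [hpos 0]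
  have hder : derivative (rootPoly a) = C ((N : ℝ) + 1) * rootPoly fun j : Fin N => v j.succ := by
    have hsplit : rootPoly v = X * rootPoly fun j : Fin N => v j.succ := by
      simp [rootPoly, Fin.prod_univ_succ, hv0]
    apply mul_left_cancel₀ (X_ne_zero (R := ℝ))
    rw [hsplit] at heq
    simp only [map_zero, zero_mul, zero_add, Nat.cast_add, Nat.cast_one] at heq
    rw [heq]; ring
  refine ⟨fun j => v j.succ, ((N : ℝ) + 1) * m, ?_, ?_, ?_, ?_⟩
  · exact fun i j hij => monotone_of_interlace hle hge (Fin.succ_le_succ_iff.2 hij)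
  · exact fun j => (hpos 0).trans_le (hge 0 _ (Fin.succ_pos j))
  · rw [derivative_expand, hder]
    simp only [map_mul, expand_C, map_natCast]
    ring
  · intro q A hq0 hq1 haA hA j
    rw [pow_one]
    have hj0 : (0 : ℝ) ≤ (j : ℕ) := Nat.cast_nonneg _
    refine hbd j.succ (A j.succ) q ((j : ℕ) + 2) hq0 hq1 (by linarith) ?_ (haA _)
      fun i hi => (haA i).trans (hA i _ hi)
    simp only [Fin.val_succ]
    push_cast
    linarith

/-- The first `i + 1 ≤ m` derivatives of `Q(z ^ m)`: what remains, besides a power of `z`, is a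
polynomial in `z ^ m` with positive roots. -/
lemma level_aux {N m : ℕ} (a : Fin (N + 1) → ℝ) (ha : Monotone a)
    (hpos : ∀ j, 0 < a j) (i : ℕ) (hi : i + 1 ≤ m) :
    ∃ (w : Fin N → ℝ) (c : ℝ), Monotone w ∧ (∀ j, 0 < w j) ∧
      derivative^[i + 1] (expand ℝ m (rootPoly a)) =
        C c * (X ^ (m - (i + 1)) * expand ℝ m (rootPoly w)) ∧
      LevelBound (i + 1) a w := by
  induction i with
  | zero => exact first_step a ha hpos
  | succ i ih =>
    obtain ⟨b, c, hb, hbpos, heq, hbd⟩ := ih (by omega)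
    obtain ⟨k, hk⟩ : ∃ k, m - (i + 1) = k + 1 := ⟨m - (i + 2), by omega⟩
    have hm0 : (0 : ℝ) < m := by exact_mod_cast (by omega : 0 < m)
    have hκ : (0 : ℝ) < ((k : ℝ) + 1) / m := by positivity
    have hκ1 : ((k : ℝ) + 1) / m ≤ 1 := by
      rw [div_le_one hm0]; exact_mod_cast (by omega : k + 1 ≤ m)
    obtain ⟨w, h0, hle, hge, hpoly, hbd'⟩ := step hκ.le b hb hbpos
    refine ⟨w, c * (m * (((k : ℝ) + 1) / m + N)), monotone_of_interlace hle hge, ?_, ?_, ?_⟩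
    · intro j
      refine lt_of_le_of_ne (h0 j) fun hj => ?_
      have h1 := congrArg (eval 0) hpoly
      have h2 : (rootPoly w).eval 0 = 0 := by
        rw [eval_rootPoly]
        exact Finset.prod_eq_zero (Finset.mem_univ j) (by rw [← hj, sub_zero])
      simp only [eval_add, eval_mul, eval_X, eval_C, h2, zero_mul, add_zero, mul_zero] at h1
      rw [eval_rootPoly] at h1
      refine (mul_ne_zero hκ.ne' (Finset.prod_ne_zero_iff.2 fun l _ => ?_)) h1
      linarith [hbpos l]
    · rw [Function.iterate_succ_apply', heq, hk, derivative_C_mul,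
        derivative_X_pow_mul_expand k m (by omega), show m - (i + 1 + 1) = k by omega]
      have h3 : C ((k : ℝ) + 1) * rootPoly b + C (m : ℝ) * (X * derivative (rootPoly b)) =
          C ((m : ℝ) * (((k : ℝ) + 1) / m + N)) * rootPoly w := by
        rw [C_mul, mul_assoc, ← hpoly, mul_add, ← mul_assoc (C (m : ℝ)) (C _) (rootPoly b), ← C_mul,
          mul_div_cancel₀ _ hm0.ne']
      rw [h3, map_mul, expand_C, C_mul (a := c)]
      ring
    · intro q A hq0 hq1 haA hA j
      have hj0 : (0 : ℝ) ≤ (j : ℕ) := Nat.cast_nonneg _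
      have hq' : 0 < 1 - q := by linarith
      have hApos : ∀ j, 0 < A j := fun j => (hpos j).trans_le (haA j)
      rw [pow_succ', mul_assoc]
      refine hbd' j _ q ((j : ℕ) + 2) hq0 hq1 (by linarith) (by linarith)
        (hbd q A hq0 hq1 haA hA j) fun l hl => (hbd q A hq0 hq1 haA hA l).trans ?_
      have h4 : ((l : ℕ) : ℝ) ≤ (j : ℕ) := by exact_mod_cast (Fin.lt_def.1 hl).le
      have h5 := pow_le_pow_left₀ (by positivity)
        (factor_mono (Nat.cast_nonneg (l : ℕ)) h4 hq1) (i + 1)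
      have h6 := hA l.succ j.succ (Fin.succ_lt_succ_iff.2 hl)
      calc _ ≤ _ := mul_le_mul h5 h6 (hApos _).le (by positivity)
        _ = _ := by ring

/-! ### Iterating the blocks -/

/-- Induction over `ℓ` blocks of `m` derivatives; the majorant `A` is replaced after one block by
`y_j ^ m * A (j + 1)`. -/
lemma iterate_levels {m : ℕ} (hm : 1 ≤ m) (ℓ : ℕ) : ∀ {N : ℕ} (a : Fin (N + ℓ) → ℝ),
    Monotone a → (∀ j, 0 < a j) →
    ∃ (w : Fin N → ℝ) (c : ℝ), Monotone w ∧ (∀ j, 0 < w j) ∧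
      derivative^[ℓ * m] (expand ℝ m (rootPoly a)) = C c * expand ℝ m (rootPoly w) ∧
      ∀ (q : ℝ) (A : Fin (N + ℓ) → ℝ), 0 ≤ q → q < 1 → (∀ j, a j ≤ A j) →
        (∀ i j, i < j → A i ≤ q * A j) →
        ∀ (j : Fin N) (j' : Fin (N + ℓ)), (j' : ℕ) = j + ℓ →
          w j ≤ (((j : ℕ) + 2 : ℝ) / (((j : ℕ) + ℓ + 2 : ℝ) * (1 - q) ^ ℓ)) ^ m * A j' := by
  induction ℓ with
  | zero =>
    intro N a ha hpos
    refine ⟨a, 1, ha, hpos, by simp, fun q A _ _ haA _ j j' hj => ?_⟩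
    obtain rfl : j' = j := Fin.ext hj
    have : ((j' : ℕ) : ℝ) + 2 ≠ 0 := by positivity
    simpa [div_self this] using haA j'
  | succ ℓ ih =>
    intro N a ha hpos
    obtain ⟨b, c, hb, hbpos, heq, hbd⟩ :=
      level_aux (N := N + ℓ) (m := m) a ha hpos (m - 1) (by omega)
    rw [show m - 1 + 1 = m by omega] at heq hbd
    obtain ⟨w, d, hw, hwpos, heq', hbd'⟩ := ih b hb hbpos
    refine ⟨w, c * d, hw, hwpos, ?_, ?_⟩
    · rw [Nat.succ_mul, Function.iterate_add_apply]
      have h1 : derivative^[m] (expand ℝ m (rootPoly a)) = C c * expand ℝ m (rootPoly b) := by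
        rw [heq, Nat.sub_self, pow_zero, one_mul]
      erw [h1]
      rw [iterate_derivative_C_mul, heq', C_mul, mul_assoc]
    · intro q A hq0 hq1 haA hA j j' hj
      have hq' : 0 < 1 - q := by linarith
      have hApos : ∀ j, 0 < A j := fun j => (hpos j).trans_le (haA j)
      have hlt : (j : ℕ) + ℓ < N + ℓ := by have := j.2; omega
      have h2 := hbd' q (fun i : Fin (N + ℓ) =>
          (((i : ℕ) + 2 : ℝ) / (((i : ℕ) + 2 + 1 : ℝ) * (1 - q))) ^ m *
            A (Fin.succ (n := N + ℓ) i)) hq0 hq1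
        (hbd q A hq0 hq1 haA hA) (fun i k hik => ?_) j ⟨j + ℓ, hlt⟩ rfl
      · refine h2.trans (le_of_eq ?_)
        have hj' : j' = Fin.succ (n := N + ℓ) ⟨j + ℓ, hlt⟩ := Fin.ext hj
        rw [hj']
        rw [← mul_assoc, ← mul_pow]
        congr 2
        have : ((j : ℕ) : ℝ) + ℓ + 2 ≠ 0 := by positivity
        have : ((j : ℕ) : ℝ) + ℓ + 2 + 1 ≠ 0 := by positivity
        push_cast
        rw [pow_succ, show ((j : ℕ) : ℝ) + (ℓ + 1) + 2 = (j : ℕ) + ℓ + 2 + 1 by ring]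
        field_simp
      · have h4 : ((i : ℕ) : ℝ) ≤ (k : ℕ) := by exact_mod_cast (Fin.lt_def.1 hik).le
        have h5 := pow_le_pow_left₀ (by positivity)
          (factor_mono (Nat.cast_nonneg (i : ℕ)) h4 hq1) m
        have h6 := hA (Fin.succ (n := N + ℓ) i) (Fin.succ (n := N + ℓ) k)
          (Fin.succ_lt_succ_iff.2 hik)
        calc _ ≤ _ := mul_le_mul h5 h6 (hApos _).le (by positivity)
          _ = _ := by ring

/-! ### Identification of the factors and conclusion -/

lemma expand_rootPoly {N m : ℕ} (v : Fin N → ℝ) :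
    expand ℝ m (rootPoly v) = ∏ j, (X ^ m - C (v j)) := by
  simp [rootPoly, map_prod]

lemma rootPoly_injective {N : ℕ} {v w : Fin N → ℝ} (hv : Monotone v) (hw : Monotone w)
    (h : rootPoly v = rootPoly w) : v = w := by
  have key : ∀ u : Fin N → ℝ, (rootPoly u).roots = (List.ofFn u : Multiset ℝ) := by
    intro u
    rw [← roots_multiset_prod_X_sub_C (List.ofFn u : Multiset ℝ)]
    congr 1
    simp [rootPoly, List.prod_ofFn, List.map_ofFn, Function.comp_def]
  have h1 : (List.ofFn v).Perm (List.ofFn w) := by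
    rw [← Multiset.coe_eq_coe, ← key, ← key, h]
  apply List.ofFn_injective
  exact List.Perm.eq_of_pairwise' hv.sortedLE_ofFn.pairwise hw.sortedLE_ofFn.pairwise h1

/-- The constant factor is found by comparing leading coefficients. -/
lemma leading_const {N ℓ m : ℕ} (hm : 1 ≤ m) (a : Fin (N + ℓ) → ℝ) (w : Fin N → ℝ) (c : ℝ)
    (h : derivative^[ℓ * m] (expand ℝ m (rootPoly a)) = C c * expand ℝ m (rootPoly w)) :
    c = (Nat.factorial ((N + ℓ) * m) : ℝ) / (Nat.factorial (N * m) : ℝ) := by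
  have hlead : ∀ {M : ℕ} (v : Fin M → ℝ), (expand ℝ m (rootPoly v)).coeff (M * m) = 1 := by
    intro M v
    rw [coeff_expand_mul hm]
    have := monic_rootPoly v
    rwa [Monic, leadingCoeff, natDegree_rootPoly] at this
  have h1 := congrArg (fun p => coeff p (N * m)) h
  simp only [coeff_iterate_derivative, coeff_C_mul, hlead, mul_one, ← add_mul, nsmul_eq_mul] at h1
  rw [← h1, eq_div_iff (by positivity), mul_comm]
  have h2 := Nat.factorial_mul_descFactorial (show ℓ * m ≤ (N + ℓ) * m by gcongr; omega)
  rw [show (N + ℓ) * m - ℓ * m = N * m by rw [add_mul]; omega] at h2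
  exact_mod_cast h2

/-- For a nondecreasing sequence of positive radii `(rn_j)` and
`1 ≤ ℓ ≤ n-1`, the `(ℓm)`-th derivative of `P_{n,m}(z) = Π_j (z^m - rn_j^m)` factors as
`((nm)!/((n-ℓ)m)!) · Π_{j=1}^{n-ℓ} (z^m - (r^{(n,m,ℓ)}_j)^m)` for some nondecreasing
positive sequence. Moreover, if `(r_j)` is strictly increasing positive with
`α = max_j r_j/r_{j+1}` and `rn_j ≤ r_j` for all `j`, then any such sequence satisfies
`r^{(n,m,ℓ)}_j ≤ ((j+1)/((j+ℓ+1)(1-α^m)^ℓ))·r_{j+ℓ}` (indices counted from `1`). -/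
theorem stmt10 (n m : ℕ) (hn : 2 ≤ n) (hm : 1 ≤ m)
    (rn : Fin n → ℝ) (hrn : Monotone rn) (hrnpos : ∀ j, 0 < rn j) :
    ∀ ℓ : ℕ, 1 ≤ ℓ → ℓ ≤ n - 1 →
      ((∃ s : Fin (n - ℓ) → ℝ, Monotone s ∧ (∀ j, 0 < s j) ∧
        derivative^[ℓ * m] (∏ j, (X ^ m - C (rn j ^ m)))
          = C ((Nat.factorial (n * m) : ℝ) / (Nat.factorial ((n - ℓ) * m) : ℝ)) *
              ∏ j, (X ^ m - C (s j ^ m)))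
      ∧
      (∀ s : Fin (n - ℓ) → ℝ, Monotone s → (∀ j, 0 < s j) →
        derivative^[ℓ * m] (∏ j, (X ^ m - C (rn j ^ m)))
          = C ((Nat.factorial (n * m) : ℝ) / (Nat.factorial ((n - ℓ) * m) : ℝ)) *
              ∏ j, (X ^ m - C (s j ^ m)) →
        ∀ r : Fin n → ℝ, StrictMono r → (∀ j, 0 < r j) →
        ∀ α : ℝ,
          IsGreatest {x : ℝ | ∃ i j : Fin n, (i : ℕ) + 1 = (j : ℕ) ∧ x = r i / r j} α →
        (∀ j, rn j ≤ r j) →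
        ∀ (j : Fin (n - ℓ)) (j' : Fin n), (j' : ℕ) = (j : ℕ) + ℓ →
          s j ≤ (((j : ℕ) + 2 : ℝ) / ((((j : ℕ) + ℓ + 2 : ℝ)) * (1 - α ^ m) ^ ℓ)) * r j')) := by
  intro ℓ _ hℓ
  obtain ⟨N, hN⟩ : ∃ N, n - ℓ = N := ⟨_, rfl⟩
  rw [hN]
  obtain rfl : n = N + ℓ := by omega
  have hm0 : m ≠ 0 := by omega
  obtain ⟨w, c, hw, hwpos, heq, hbd⟩ := iterate_levels hm ℓ (fun j => rn j ^ m)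
    (fun i j hij => pow_le_pow_left₀ (hrnpos i).le (hrn hij) m) (fun j => pow_pos (hrnpos j) m)
  obtain rfl := leading_const hm _ _ _ heq
  rw [expand_rootPoly] at heq
  rw [heq]
  refine ⟨⟨fun j => w j ^ ((m : ℝ)⁻¹), ?_, ?_, ?_⟩, ?_⟩
  · exact fun i j hij => Real.rpow_le_rpow (hwpos i).le (hw hij) (by positivity)
  · exact fun j => Real.rpow_pos_of_pos (hwpos j) _
  · simp_rw [Real.rpow_inv_natCast_pow (hwpos _).le hm0, expand_rootPoly]
  · intro s hs hspos hfac r hr hrpos α hα hrnr j j' hj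
    have hC : C ((Nat.factorial ((N + ℓ) * m) : ℝ) / (Nat.factorial (N * m) : ℝ)) ≠ 0 :=
      C_ne_zero.2 (by positivity)
    have h1 := mul_left_cancel₀ hC hfac
    rw [← expand_rootPoly (fun j => s j ^ m)] at h1
    have h2 := rootPoly_injective hw
      (fun i j hij => pow_le_pow_left₀ (hspos i).le (hs hij) m) (expand_injective hm h1)
    obtain ⟨⟨i₀, j₀, hij₀, hα₀⟩, hmax⟩ := hα
    have hα0 : 0 < α := hα₀ ▸ div_pos (hrpos _) (hrpos _)
    have hα1 : α < 1 := by
      rw [hα₀, div_lt_one (hrpos _)]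
      exact hr (Fin.lt_def.2 (by omega))
    have hgap : ∀ i k : Fin (N + ℓ), i < k → r i ≤ α * r k := by
      intro i k hik
      have hik' := Fin.lt_def.1 hik
      have h3 : r ⟨k - 1, by omega⟩ / r k ≤ α :=
        hmax ⟨⟨k - 1, by omega⟩, k, by simp only; omega, rfl⟩
      rw [div_le_iff₀ (hrpos k)] at h3
      exact (hr.monotone (Fin.le_def.2 (by simp only; omega))).trans h3
    have hq1 : α ^ m < 1 := pow_lt_one₀ hα0.le hα1 hm0
    have h4 := hbd (α ^ m) (fun j => r j ^ m) (by positivity) hq1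
      (fun j => pow_le_pow_left₀ (hrnpos j).le (hrnr j) m)
      (fun i k hik => by
        rw [← mul_pow]
        exact pow_le_pow_left₀ (hrpos i).le (hgap i k hik) m) j j' hj
    rw [h2, ← mul_pow] at h4
    have h5 : 0 < 1 - α ^ m := by linarith
    have h6 := hrpos j'
    exact le_of_pow_le_pow_left₀ hm0 (by positivity) h4
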